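/- arXiv:math/0411588 — 2 statements merged into one kernel-verified Lean document; each statement's English description precedes it below -/
import Mathlib

section
/- In the ring B_A one has (1 + y_k)·(1 − q_k·y_k) = 1 for every 1 ≤ k ≤ m; in particular 1 + y_k is a unit of B_A with inverse 1 − q_k·y_k. -/
open MvPolynomial

/-- The polynomials `q_k` of Definition 3, defined inductively from a strictly upper
triangular integer matrix `A` (indices `0,…,m-1` correspond to the paper's `1,…,m`). -/
noncomputable def qpol {m : ℕ} (A : Fin m → Fin m → ℤ) : Fin m → MvPolynomial (Fin m) ℤ
  | k =>
    ∏ i ∈ (Finset.Iio k).attach,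
      ((X i.1 + 1) ^ (A i.1 k).toNat * (-(qpol A i.1 * X i.1) + 1) ^ (-(A i.1 k)).toNat)
  termination_by k => (k : ℕ)
  decreasing_by exact Fin.lt_iff_val_lt_val.mp (Finset.mem_Iio.mp i.2)

/-- The polynomials `q̄_k` of Definition 3. -/
noncomputable def qbar {m : ℕ} (A : Fin m → Fin m → ℤ) (k : Fin m) : MvPolynomial (Fin m) ℤ :=
  ∏ i ∈ Finset.Iio k,
    ((-(qpol A i * X i) + 1) ^ (A i k).toNat * (X i + 1) ^ (-(A i k)).toNat)

/-- The ideal `⟨y_k² − (q̄_k − 1)·y_k : 1 ≤ k ≤ m⟩` of `ℤ[y₁,…,y_m]`. -/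
noncomputable def relIdeal {m : ℕ} (A : Fin m → Fin m → ℤ) : Ideal (MvPolynomial (Fin m) ℤ) :=
  Ideal.span (Set.range fun k : Fin m => X k ^ 2 - (qbar A k - 1) * X k)

/-- The quotient ring `B_A = ℤ[y₁,…,y_m]/⟨y_k² − (q̄_k − 1)·y_k⟩`. -/
abbrev BA {m : ℕ} (A : Fin m → Fin m → ℤ) :=
  MvPolynomial (Fin m) ℤ ⧸ relIdeal A

/-- The class `y_I ∈ B_A` of the squarefree monomial `∏_{i ∈ I} y_i`. -/
noncomputable def yI {m : ℕ} (A : Fin m → Fin m → ℤ) (I : Finset (Fin m)) : BA A :=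
  Ideal.Quotient.mk (relIdeal A) (∏ i ∈ I, X i)

/-! By induction on `k`: if `1 - q_i y_i` inverts `1 + y_i` for all `i < k`, then the factors of
`q_k` are the inverses of the corresponding factors of `q̄_k`, hence `q_k q̄_k = 1`. Multiplying
`y_k² = (q̄_k - 1) y_k` by `q_k` gives `q_k y_k² = y_k - q_k y_k`, which is
`(1 + y_k) (1 - q_k y_k) = 1`. -/

section Recurrence

variable {ι R : Type*}

theorem prod_pow_mul_pow_mul_prod_swap_eq_one [CommMonoid R] {s : Finset ι} {u v : ι → R}
    (huv : ∀ i ∈ s, u i * v i = 1) (a b : ι → ℕ) :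
    (∏ i ∈ s, u i ^ a i * v i ^ b i) * ∏ i ∈ s, v i ^ a i * u i ^ b i = 1 := by
  rw [← Finset.prod_mul_distrib]
  refine Finset.prod_eq_one fun i hi => ?_
  calc u i ^ a i * v i ^ b i * (v i ^ a i * u i ^ b i)
      = (u i * v i) ^ a i * (v i * u i) ^ b i := by
        rw [mul_mul_mul_comm, mul_pow, mul_pow]
    _ = 1 := by rw [mul_comm (v i), huv i hi, one_pow, one_pow, one_mul]

variable [CommRing R]

theorem one_add_mul_one_sub_mul_eq_one {y q r : R} (hqr : q * r = 1)
    (hy : y ^ 2 = (r - 1) * y) : (1 + y) * (1 - q * y) = 1 :=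
  calc (1 + y) * (1 - q * y)
      = 1 + y - q * y - q * y ^ 2 := by ring
    _ = 1 + y - q * r * y := by rw [hy]; ring
    _ = 1 := by rw [hqr]; ring

theorem stmt3_general [LT ι] [WellFoundedLT ι] {s : ι → Finset ι} (hs : ∀ k, ∀ i ∈ s k, i < k)
    {a b : ι → ι → ℕ} {y q r : ι → R}
    (hq : ∀ k, q k = ∏ i ∈ s k, (1 + y i) ^ a i k * (1 - q i * y i) ^ b i k)
    (hr : ∀ k, r k = ∏ i ∈ s k, (1 - q i * y i) ^ a i k * (1 + y i) ^ b i k)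
    (hy : ∀ k, y k ^ 2 = (r k - 1) * y k) (k : ι) :
    (1 + y k) * (1 - q k * y k) = 1 := by
  induction k using WellFoundedLT.induction with
  | ind k ih =>
    have hqr : q k * r k = 1 := by
      rw [hq, hr]
      exact prod_pow_mul_pow_mul_prod_swap_eq_one (fun i hi => ih i (hs k i hi)) _ _
    exact one_add_mul_one_sub_mul_eq_one hqr (hy k)

end Recurrence

section Presentation

variable {m : ℕ} (A : Fin m → Fin m → ℤ)

theorem qpol_eq_prod (k : Fin m) :
    qpol A k = ∏ i ∈ Finset.Iio k,
      ((X i + 1) ^ (A i k).toNat * (-(qpol A i * X i) + 1) ^ (-(A i k)).toNat) := by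
  rw [qpol]
  exact Finset.prod_attach (Finset.Iio k) fun i =>
    (X i + 1) ^ (A i k).toNat * (-(qpol A i * X i) + 1) ^ (-(A i k)).toNat

theorem map_qpol {R : Type*} [CommRing R] (φ : MvPolynomial (Fin m) ℤ →+* R) (k : Fin m) :
    φ (qpol A k) = ∏ i ∈ Finset.Iio k,
      (1 + φ (X i)) ^ (A i k).toNat * (1 - φ (qpol A i) * φ (X i)) ^ (-(A i k)).toNat := by
  rw [qpol_eq_prod]
  simp only [map_prod, map_mul, map_pow, map_add, map_sub, map_one, neg_add_eq_sub,
    add_comm _ (1 : R)]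

theorem map_qbar {R : Type*} [CommRing R] (φ : MvPolynomial (Fin m) ℤ →+* R) (k : Fin m) :
    φ (qbar A k) = ∏ i ∈ Finset.Iio k,
      (1 - φ (qpol A i) * φ (X i)) ^ (A i k).toNat * (1 + φ (X i)) ^ (-(A i k)).toNat := by
  simp only [qbar, map_prod, map_mul, map_pow, map_add, map_sub, map_one, neg_add_eq_sub,
    add_comm _ (1 : R)]

theorem mk_X_sq (k : Fin m) :
    Ideal.Quotient.mk (relIdeal A) (X k) ^ 2 =
      (Ideal.Quotient.mk (relIdeal A) (qbar A k) - 1) * Ideal.Quotient.mk (relIdeal A) (X k) := by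
  have hrel : X k ^ 2 - (qbar A k - 1) * X k ∈ relIdeal A := Ideal.subset_span ⟨k, rfl⟩
  simpa only [map_pow, map_mul, map_sub, map_one] using
    (Ideal.Quotient.mk_eq_mk_iff_sub_mem _ _).mpr hrel

end Presentation

/-- In the ring `B_A` one has `(1 + y_k)·(1 − q_k·y_k) = 1` for every `k`;
in particular `1 + y_k` is a unit of `B_A` with inverse `1 − q_k·y_k`. -/
theorem stmt3 {m : ℕ} (hm : 0 < m) (A : Fin m → Fin m → ℤ)
    (hA : ∀ i j : Fin m, j ≤ i → A i j = 0) (k : Fin m) :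
    Ideal.Quotient.mk (relIdeal A) (1 + X k) *
      Ideal.Quotient.mk (relIdeal A) (1 - qpol A k * X k) = 1 ∧
    IsUnit (Ideal.Quotient.mk (relIdeal A) (1 + X k)) := by
  have hinv : Ideal.Quotient.mk (relIdeal A) (1 + X k) *
      Ideal.Quotient.mk (relIdeal A) (1 - qpol A k * X k) = 1 := by
    simpa only [map_add, map_sub, map_mul, map_one] using
      stmt3_general (fun _ _ => Finset.mem_Iio.mp) (map_qpol A _) (map_qbar A _) (mk_X_sq A) k
  exact ⟨hinv, .of_mul_eq_one _ hinv⟩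
end

section
/- If f ∈ ℤ[y₁,…,y_m] satisfies f_{(m)} = 0 (i.e., every monomial of f has total degree strictly greater than m), then in the unique expansion of the image of f in B_A as Σ_{I ⊆ {1,…,m}} a_I(f)·y_I, the top coefficient a_{{1,…,m}}(f) equals 0. -/
open MvPolynomial

/-- `f_{(n)}`: the sum of the monomials of `f` of total degree at most `n`. -/
noncomputable def trunc {σ : Type*} (n : ℕ) (f : MvPolynomial σ ℤ) : MvPolynomial σ ℤ :=
  ∑ d ∈ f.support.filter (fun d => (d.sum fun _ e => e) ≤ n),
    monomial d (coeff d f)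

/-!
Divide by the relations `y_k ^ 2 - p_k * y_k`, where `p_k = q̄_k - 1`, from the largest index `k`
down to the smallest. Since `p_k` involves only variables of smaller index and has no constant term,
each division

* fixes squarefree monomials,
* commutes with multiplication by the relations of smaller index, and
* replaces `y_k ^ (e + 1)` by `p_k ^ e * y_k`, so it keeps the powers of the ideal of the variables.

Starting from the congruence `f ≡ ∑ c_I y_I`, the divisions turn `f` into a polynomial equal
to `∑ c_I y_I`. If every monomial of `f` has degree greater than `n`, so does every monomial of this
polynomial, and `c_I = 0` for all `I` with at most `n` elements.
-/

section Preliminaries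

variable {σ R : Type*} [CommRing R]

theorem X_mem_supported_of_mem {s : Set σ} {i : σ} (hi : i ∈ s) : X i ∈ supported R s :=
  Algebra.subset_adjoin (Set.mem_image_of_mem X hi)

theorem X_add_one_mem_supported_Iio [Preorder σ] {i k : σ} (hik : i < k) :
    X i + 1 ∈ supported R (Set.Iio k) :=
  add_mem (X_mem_supported_of_mem hik) (one_mem _)

theorem neg_mul_X_add_one_mem_supported_Iio [Preorder σ] {i k : σ} (hik : i < k)
    {q : MvPolynomial σ R} (hq : q ∈ supported R (Set.Iio i)) :
    -(q * X i) + 1 ∈ supported R (Set.Iio k) :=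
  add_mem (neg_mem (mul_mem (supported_mono (Set.Iio_subset_Iio hik.le) hq)
    (X_mem_supported_of_mem hik))) (one_mem _)

theorem mem_idealOfVars_of_constantCoeff_eq_zero {f : MvPolynomial σ R}
    (hf : constantCoeff f = 0) : f ∈ idealOfVars σ R := by
  rw [← pow_one (idealOfVars σ R), mem_pow_idealOfVars_iff']
  intro d hd
  rwa [(Finsupp.degree_eq_zero_iff d).mp (Nat.lt_one_iff.mp hd)]

theorem indicator_one_injective :
    Function.Injective fun I : Finset σ => Finsupp.indicator I fun _ _ => 1 := by
  classical
  intro I J hIJ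
  ext i
  have hi := DFunLike.congr_fun hIJ i
  simp only [Finsupp.indicator_apply] at hi
  split_ifs at hi <;> simp_all

theorem prod_X_eq_monomial_indicator (I : Finset σ) :
    ∏ i ∈ I, (X i : MvPolynomial σ R) = monomial (Finsupp.indicator I fun _ _ => 1) 1 := by
  simpa only [pow_one] using prod_X_pow (R := R) (fun _ : σ => 1) I

end Preliminaries

section QuadraticRem

variable {σ R : Type*} [CommRing R]

/-- The remainder of the division by `X k ^ 2 - p * X k` with respect to the variable `X k`, where
`p` is meant not to involve `X k`: it sends `X k ^ (e + 1)` to `p ^ e * X k` and is linear over the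
other variables. The exponents `min (d k) 1` and `d k - 1` also cover `d k = 0`, where both are
`0`. -/
noncomputable def quadraticRem (k : σ) (p : MvPolynomial σ R) :
    MvPolynomial σ R →ₗ[R] MvPolynomial σ R :=
  (basisMonomials σ R).constr R fun d =>
    monomial (d.erase k) 1 * X k ^ min (d k) 1 * p ^ (d k - 1)

theorem quadraticRem_monomial (k : σ) (p : MvPolynomial σ R) (d : σ →₀ ℕ) (r : R) :
    quadraticRem k p (monomial d r) =
      monomial (d.erase k) r * X k ^ min (d k) 1 * p ^ (d k - 1) := by
  have hone : quadraticRem k p (monomial d 1) =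
      monomial (d.erase k) 1 * X k ^ min (d k) 1 * p ^ (d k - 1) := by
    rw [quadraticRem, ← congrFun (coe_basisMonomials σ R) d, Module.Basis.constr_basis]
  have hsmul (e : σ →₀ ℕ) : monomial e r = r • (monomial e 1 : MvPolynomial σ R) := by
    rw [smul_monomial, smul_eq_mul, mul_one]
  rw [hsmul d, map_smul, hone, hsmul (d.erase k), smul_mul_assoc, smul_mul_assoc]

theorem quadraticRem_monomial_of_le_one (p : MvPolynomial σ R) {k : σ} {d : σ →₀ ℕ}
    (hd : d k ≤ 1) (r : R) : quadraticRem k p (monomial d r) = monomial d r := by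
  rw [quadraticRem_monomial, min_eq_left hd, Nat.sub_eq_zero_of_le hd, pow_zero, mul_one,
    X_pow_eq_monomial, monomial_mul, mul_one, Finsupp.erase_add_single]

theorem quadraticRem_prod_X (k : σ) (p : MvPolynomial σ R) (I : Finset σ) :
    quadraticRem k p (∏ i ∈ I, X i) = ∏ i ∈ I, X i := by
  classical
  rw [prod_X_eq_monomial_indicator]
  refine quadraticRem_monomial_of_le_one p ?_ 1
  rw [Finsupp.indicator_apply]
  split_ifs <;> simp

theorem quadraticRem_X_mul {i k : σ} (hik : i ≠ k) (p f : MvPolynomial σ R) :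
    quadraticRem k p (X i * f) = X i * quadraticRem k p f := by
  induction f using MvPolynomial.induction_on' with
  | monomial d r =>
    have hX (e : σ →₀ ℕ) : X i * monomial e r = monomial (Finsupp.single i 1 + e) r := by
      rw [X, monomial_mul, one_mul]
    rw [hX, quadraticRem_monomial, quadraticRem_monomial, Finsupp.erase_add,
      Finsupp.erase_single_ne hik.symm, Finsupp.add_apply, Finsupp.single_eq_of_ne hik.symm,
      zero_add, ← hX, mul_assoc, mul_assoc, mul_assoc]
  | add f g hf hg => rw [mul_add, map_add, hf, hg, map_add, mul_add]

theorem quadraticRem_mul_left {k : σ} {g : MvPolynomial σ R} (hg : g ∈ supported R {k}ᶜ)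
    (p f : MvPolynomial σ R) : quadraticRem k p (g * f) = g * quadraticRem k p f := by
  induction hg using Algebra.adjoin_induction generalizing f with
  | mem x hx =>
    obtain ⟨i, hi, rfl⟩ := hx
    exact quadraticRem_X_mul hi p f
  | algebraMap r => rw [← Algebra.smul_def, map_smul, Algebra.smul_def]
  | add x y _ _ hx hy => rw [add_mul, map_add, hx, hy, add_mul]
  | mul x y _ _ hx hy => rw [mul_assoc, hx, hy, mul_assoc]

theorem quadraticRem_mul_relation {k : σ} {p : MvPolynomial σ R} (hp : p ∈ supported R {k}ᶜ)
    (f : MvPolynomial σ R) : quadraticRem k p (f * (X k ^ 2 - p * X k)) = 0 := by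
  induction f using MvPolynomial.induction_on' with
  | monomial d r =>
    have hX (n : ℕ) : monomial d r * X k ^ n = monomial (d + Finsupp.single k n) r := by
      rw [X_pow_eq_monomial, monomial_mul, mul_one]
    have hrem (n : ℕ) : quadraticRem k p (monomial d r * X k ^ (n + 1)) =
        monomial (d.erase k) r * X k * p ^ (d k + n) := by
      rw [hX, quadraticRem_monomial, Finsupp.erase_add, Finsupp.erase_single, add_zero,
        Finsupp.add_apply, Finsupp.single_eq_same, ← add_assoc, Nat.add_sub_cancel,
        min_eq_right (Nat.le_add_left 1 _), pow_one]
    calc quadraticRem k p (monomial d r * (X k ^ 2 - p * X k))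
        = quadraticRem k p (monomial d r * X k ^ (1 + 1)) -
            p * quadraticRem k p (monomial d r * X k ^ (0 + 1)) := by
          rw [← quadraticRem_mul_left hp, ← map_sub]
          ring_nf
      _ = 0 := by
          rw [hrem, hrem]
          ring
  | add f g hf hg => rw [add_mul, map_add, hf, hg, add_zero]

theorem quadraticRem_mem_pow_idealOfVars (k : σ) {p : MvPolynomial σ R}
    (hp : p ∈ idealOfVars σ R) {n : ℕ} {f : MvPolynomial σ R} (hf : f ∈ idealOfVars σ R ^ n) :
    quadraticRem k p f ∈ idealOfVars σ R ^ n := by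
  rw [f.as_sum, map_sum]
  refine sum_mem fun d hd => ?_
  have hn : n ≤ d.degree := (mem_pow_idealOfVars_iff n f).mp hf d hd
  have hdeg : d.degree = (d.erase k).degree + min (d k) 1 + (d k - 1) := by
    have hsplit := congrArg Finsupp.degree (Finsupp.erase_add_single k d)
    rw [map_add, Finsupp.degree_single] at hsplit
    omega
  have herase : monomial (d.erase k) (coeff d f) ∈ idealOfVars σ R ^ (d.erase k).degree :=
    (monomial_mem_pow_idealOfVars_iff _ _ (mem_support_iff.mp hd)).mpr le_rfl
  have hXk : X k ∈ idealOfVars σ R := Ideal.subset_span (Set.mem_range_self k)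
  refine Ideal.pow_le_pow_right hn ?_
  rw [quadraticRem_monomial, hdeg, pow_add, pow_add]
  exact Ideal.mul_mem_mul (Ideal.mul_mem_mul herase (Ideal.pow_mem_pow hXk _))
    (Ideal.pow_mem_pow hp _)

end QuadraticRem

section SquarefreeExpansion

variable {σ R : Type*} [CommRing R]

theorem eq_zero_of_sum_smul_prod_X_mem_pow_idealOfVars {n : ℕ} {S : Finset (Finset σ)}
    {c : Finset σ → R} (h : ∑ I ∈ S, c I • ∏ i ∈ I, X i ∈ idealOfVars σ R ^ (n + 1))
    {I : Finset σ} (hI : I ∈ S) (hIn : I.card ≤ n) : c I = 0 := by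
  classical
  have hdeg : (Finsupp.indicator I fun _ _ => 1).degree < n + 1 := by
    rw [Finsupp.indicator_eq_sum_single, map_sum]
    simpa using Nat.lt_succ_of_le hIn
  have hcoeff := (mem_pow_idealOfVars_iff' _ _).mp h _ hdeg
  simpa only [coeff_sum, coeff_smul, prod_X_eq_monomial_indicator, coeff_monomial,
    indicator_one_injective.eq_iff, smul_eq_mul, mul_ite, mul_one, mul_zero, Finset.sum_ite_eq',
    if_pos hI] using hcoeff

variable [LinearOrder σ] {p : σ → MvPolynomial σ R}

theorem quadraticRem_mem_span_relations (hp : ∀ k, p k ∈ supported R (Set.Iio k)) {s : Set σ}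
    {k : σ} (hs : ∀ j ∈ s, j < k) {f : MvPolynomial σ R}
    (hf : f ∈ Ideal.span ((fun j => X j ^ 2 - p j * X j) '' insert k s)) :
    quadraticRem k (p k) f ∈ Ideal.span ((fun j => X j ^ 2 - p j * X j) '' s) := by
  induction hf using Submodule.closure_induction with
  | zero => rw [map_zero]; exact zero_mem _
  | add f g _ _ hf hg => rw [map_add]; exact add_mem hf hg
  | smul_mem g f hf =>
    obtain ⟨j, rfl | hj, rfl⟩ := hf
    · have hpj : p j ∈ supported R {j}ᶜ := supported_mono (fun _ hi => hi.ne) (hp j)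
      rw [smul_eq_mul, quadraticRem_mul_relation hpj]
      exact zero_mem _
    · have hX : X j ∈ supported R {k}ᶜ := X_mem_supported_of_mem (hs j hj).ne
      have hpj : p j ∈ supported R {k}ᶜ :=
        supported_mono (fun _ hi => (hi.trans (hs j hj)).ne) (hp j)
      rw [smul_eq_mul, mul_comm, quadraticRem_mul_left (sub_mem (pow_mem hX 2) (mul_mem hpj hX))]
      exact Ideal.mul_mem_right _ _ (Ideal.subset_span (Set.mem_image_of_mem _ hj))

theorem eq_zero_of_sub_sum_smul_prod_X_mem_span_relations
    (hp : ∀ k, p k ∈ supported R (Set.Iio k)) (hp₀ : ∀ k, p k ∈ idealOfVars σ R)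
    {n : ℕ} {f : MvPolynomial σ R} (hf : f ∈ idealOfVars σ R ^ (n + 1))
    {S : Finset (Finset σ)} {c : Finset σ → R} {s : Finset σ}
    (hc : f - ∑ I ∈ S, c I • ∏ i ∈ I, X i ∈ Ideal.span ((fun k => X k ^ 2 - p k * X k) '' s))
    {I : Finset σ} (hI : I ∈ S) (hIn : I.card ≤ n) : c I = 0 := by
  induction s using Finset.induction_on_max generalizing f with
  | empty =>
    rw [Finset.coe_empty, Set.image_empty, Ideal.span_empty, Ideal.mem_bot, sub_eq_zero] at hc
    exact eq_zero_of_sum_smul_prod_X_mem_pow_idealOfVars (hc ▸ hf) hI hIn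
  | insert k s hs ih =>
    refine ih (quadraticRem_mem_pow_idealOfVars k (hp₀ k) hf) ?_
    rw [Finset.coe_insert] at hc
    simpa only [map_sub, map_sum, map_smul, quadraticRem_prod_X] using
      quadraticRem_mem_span_relations hp hs hc

theorem stmt8_general (hp : ∀ k, p k ∈ supported R (Set.Iio k))
    (hp₀ : ∀ k, p k ∈ idealOfVars σ R) {n : ℕ} {f : MvPolynomial σ R}
    (hf : f ∈ idealOfVars σ R ^ (n + 1)) {S : Finset (Finset σ)} {c : Finset σ → R}
    (hc : f - ∑ I ∈ S, c I • ∏ i ∈ I, X i ∈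
      Ideal.span (Set.range fun k => X k ^ 2 - p k * X k))
    {I : Finset σ} (hI : I ∈ S) (hIn : I.card ≤ n) : c I = 0 := by
  classical
  obtain ⟨T, hT, hfT⟩ := Submodule.mem_span_finite_of_mem_span hc
  obtain ⟨s, -, rfl⟩ := Finset.subset_set_image_iff.mp (Set.image_univ.symm ▸ hT)
  rw [Finset.coe_image] at hfT
  exact eq_zero_of_sub_sum_smul_prod_X_mem_span_relations hp hp₀ hf hfT hI hIn

end SquarefreeExpansion

theorem coeff_trunc {σ : Type*} (n : ℕ) (f : MvPolynomial σ ℤ) (d : σ →₀ ℕ) :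
    coeff d (trunc n f) = if d.degree ≤ n then coeff d f else 0 := by
  classical
  simp only [trunc, coeff_sum, coeff_monomial, Finset.sum_ite_eq', Finset.mem_filter,
    mem_support_iff, Finsupp.sum, ← Finsupp.degree_apply]
  split_ifs <;> simp_all

theorem mem_pow_idealOfVars_of_trunc_eq_zero {σ : Type*} {n : ℕ} {f : MvPolynomial σ ℤ}
    (hf : trunc n f = 0) : f ∈ idealOfVars σ ℤ ^ (n + 1) := by
  rw [mem_pow_idealOfVars_iff']
  intro d hd
  rw [← coeff_zero d, ← hf, coeff_trunc, if_pos (Nat.lt_succ_iff.mp hd)]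

section Relations

variable {m : ℕ} (A : Fin m → Fin m → ℤ)

theorem qpol_mem_supported (k : Fin m) : qpol A k ∈ supported ℤ (Set.Iio k) := by
  induction k using WellFoundedLT.induction with
  | ind k ih =>
    rw [qpol]
    refine prod_mem fun i _ => ?_
    have hi : i.1 < k := Finset.mem_Iio.mp i.2
    exact mul_mem (pow_mem (X_add_one_mem_supported_Iio hi) _)
      (pow_mem (neg_mul_X_add_one_mem_supported_Iio hi (ih i.1 hi)) _)

theorem qbar_sub_one_mem_supported (k : Fin m) : qbar A k - 1 ∈ supported ℤ (Set.Iio k) := by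
  refine sub_mem (prod_mem fun i hi => ?_) (one_mem _)
  have hi : i < k := Finset.mem_Iio.mp hi
  exact mul_mem (pow_mem (neg_mul_X_add_one_mem_supported_Iio hi (qpol_mem_supported A i)) _)
    (pow_mem (X_add_one_mem_supported_Iio hi) _)

theorem qbar_sub_one_mem_idealOfVars (k : Fin m) : qbar A k - 1 ∈ idealOfVars (Fin m) ℤ :=
  mem_idealOfVars_of_constantCoeff_eq_zero (by simp [qbar])

theorem sub_sum_smul_prod_X_mem_relIdeal {f : MvPolynomial (Fin m) ℤ} {c : Finset (Fin m) → ℤ}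
    (hc : Ideal.Quotient.mk (relIdeal A) f = ∑ I : Finset (Fin m), c I • yI A I) :
    f - ∑ I : Finset (Fin m), c I • ∏ i ∈ I, X i ∈ relIdeal A := by
  rw [← Ideal.Quotient.eq, hc, map_sum]
  exact Finset.sum_congr rfl fun I _ => (map_zsmul _ _ _).symm

end Relations

/-- If `f_{(m)} = 0` (every monomial of `f` has total degree `> m`), then in the
unique expansion of the image of `f` in `B_A` as `Σ_I a_I(f)·y_I`, the top
coefficient `a_{{1,…,m}}(f)` equals `0`. -/
theorem stmt8 {m : ℕ} (hm : 0 < m) (A : Fin m → Fin m → ℤ)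
    (hA : ∀ i j : Fin m, j ≤ i → A i j = 0)
    (f : MvPolynomial (Fin m) ℤ) (hf : trunc m f = 0)
    (c : Finset (Fin m) → ℤ)
    (hc : Ideal.Quotient.mk (relIdeal A) f = ∑ I : Finset (Fin m), c I • yI A I) :
    c Finset.univ = 0 :=
  stmt8_general (qbar_sub_one_mem_supported A) (qbar_sub_one_mem_idealOfVars A)
    (mem_pow_idealOfVars_of_trunc_eq_zero hf) (sub_sum_smul_prod_X_mem_relIdeal A hc)
    (Finset.mem_univ _) (Finset.card_fin m).le
end
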